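/- arXiv:1203.5678 — 6 statements merged into one kernel-verified Lean document; each statement's English description precedes it below -/
import Mathlib

section
/- Let d be a partial metric on a nonempty set X with associated metric e, let (x_n) be a sequence in X and let x ∈ X. Then e(x_n, x) → 0 as n → ∞ if and only if both d(x_n, x) → d(x,x) as n → ∞ and d(x_m, x_n) → d(x,x) as m, n → ∞ (doubly indexed convergence). -/
/-!
The associated metric splits as `e(x, a) = (d(x, a) - d(a, a)) + (d(x, a) - d(x, x))`, a sum of two
nonnegative terms, so `e(xₙ, a) → 0` means that both `d(xₙ, a)` and the self-distances `d(xₙ, xₙ)`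
converge to `d(a, a)`. The self-distances are the diagonal of `d(xₘ, xₙ)`; conversely, once
`d(xₙ, a) → d(a, a)`, they control it through
`d(xₘ, xₘ) ≤ d(xₘ, xₙ) ≤ d(xₘ, a) + d(a, xₙ) - d(a, a)`.
-/

open Filter Topology

noncomputable section

/-- A partial metric on `X` (Matthews). -/
def IsPartialMetric {X : Type*} (d : X → X → ℝ) : Prop :=
  (∀ x y, 0 ≤ d x y) ∧
  (∀ x y, d x y = d y x) ∧
  (∀ x y, max (d x x) (d y y) ≤ d x y) ∧
  (∀ x y z, d x z ≤ d x y + d y z - d y y) ∧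
  (∀ x y, d x y = d x x → d x y = d y y → x = y)

/-- The (standard) metric associated to a partial metric. -/
def assocE {X : Type*} (d : X → X → ℝ) (x y : X) : ℝ :=
  2 * d x y - d x x - d y y

/-- Completeness of the associated metric space `(X, e)`:
every `e`-Cauchy sequence `e`-converges to some point. -/
def eComplete {X : Type*} (d : X → X → ℝ) : Prop :=
  ∀ u : ℕ → X,
    (∀ α : ℝ, 0 < α → ∃ p : ℕ, ∀ m n : ℕ, p ≤ m → p ≤ n → assocE d (u m) (u n) < α) →
    ∃ x : X, Tendsto (fun n => assocE d (u n) x) atTop (nhds 0)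

/-- `M(x,y) = max{d(x,y), d(x,Tx), d(y,Ty), (1/2)(d(x,Ty)+d(Tx,y))}`. -/
def Mfun {X : Type*} (d : X → X → ℝ) (T : X → X) (x y : X) : ℝ :=
  max (max (d x y) (max (d x (T x)) (d y (T y)))) ((d x (T y) + d (T x) y) / 2)

/-- A normal function `φ : [0,∞) → [0,∞)`. -/
def IsNormal (φ : ℝ → ℝ) : Prop :=
  (∀ t, 0 ≤ t → 0 ≤ φ t) ∧ φ 0 = 0 ∧ ∀ t, 0 < t → φ t < t

/-- `limsup_{t→s⁺} φ(t) = inf_{ε>0} sup {φ(t) : s ≤ t < s+ε}`. -/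
def rightLimsup (φ : ℝ → ℝ) (s : ℝ) : ℝ :=
  sInf {y : ℝ | ∃ ε : ℝ, 0 < ε ∧ y = sSup (φ '' Set.Ico s (s + ε))}

/-- `limsup_{t→s} φ(t) = inf_{ε>0} sup {φ(t) : t ∈ [0,∞), s-ε < t < s+ε}`. -/
def limsupAt (φ : ℝ → ℝ) (s : ℝ) : ℝ :=
  sInf {y : ℝ | ∃ ε : ℝ, 0 < ε ∧ y = sSup (φ '' (Set.Ioo (s - ε) (s + ε) ∩ Set.Ici 0))}

/-- A right limit normal function. -/
def IsRightLimitNormal (φ : ℝ → ℝ) : Prop :=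
  IsNormal φ ∧ ∀ s : ℝ, 0 < s → rightLimsup φ s < s

/-- A limit normal function. -/
def IsLimitNormal (φ : ℝ → ℝ) : Prop :=
  IsNormal φ ∧ ∀ s : ℝ, 0 < s → limsupAt φ s < s

/-- `liminf_{t→∞} ψ(t) = sup_{α ≥ 0} inf {ψ(t) : t ≥ α}`, computed in `EReal`. -/
def liminfAtInfty (ψ : ℝ → ℝ) : EReal :=
  ⨆ α : {a : ℝ // 0 ≤ a}, ⨅ t : {t : ℝ // (α : ℝ) ≤ t}, ((ψ t : ℝ) : EReal)

/-- `ψ` is semi-coercive: `liminf_{t→∞} ψ(t) > 0`. -/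
def SemiCoercive (ψ : ℝ → ℝ) : Prop := 0 < liminfAtInfty ψ

/-- A partial pseudometric: the notion of partial metric in which distances may be negative and
distinct points need not be separated, the setting in which `e`-convergence is characterized by `d`.
Given `symm`, the one-sided bound `self_le` amounts to the bound by a maximum in
`IsPartialMetric`. -/
structure IsPartialPseudometric {X : Type*} (d : X → X → ℝ) : Prop where
  symm : ∀ x y, d x y = d y x
  self_le : ∀ x y, d x x ≤ d x y
  triangle : ∀ x y z, d x z ≤ d x y + d y z - d y y

theorem IsPartialMetric.isPartialPseudometric {X : Type*} {d : X → X → ℝ}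
    (hd : IsPartialMetric d) : IsPartialPseudometric d := by
  obtain ⟨-, symm, max_self_le, triangle, -⟩ := hd
  exact ⟨symm, fun x y => (le_max_left _ _).trans (max_self_le x y), triangle⟩

theorem assocE_eq_add {X : Type*} (d : X → X → ℝ) (x y : X) :
    assocE d x y = (d x y - d y y) + (d x y - d x x) := by
  unfold assocE
  ring

namespace IsPartialPseudometric

variable {X ι : Type*} {d : X → X → ℝ} {l : Filter ι} {x : ι → X} {a : X}

theorem self_le_right (hd : IsPartialPseudometric d) (x y : X) : d y y ≤ d x y :=
  hd.symm x y ▸ hd.self_le y x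

theorem tendsto_assocE_zero_iff_tendsto_self (hd : IsPartialPseudometric d) :
    Tendsto (fun i => assocE d (x i) a) l (𝓝 0) ↔
      Tendsto (fun i => d (x i) a) l (𝓝 (d a a)) ∧
        Tendsto (fun i => d (x i) (x i)) l (𝓝 (d a a)) := by
  simp only [assocE_eq_add]
  constructor
  · intro h
    have right_gap : Tendsto (fun i => d (x i) a - d a a) l (𝓝 0) :=
      squeeze_zero (fun i => sub_nonneg.2 (hd.self_le_right (x i) a))
        (fun i => le_add_of_nonneg_right (sub_nonneg.2 (hd.self_le (x i) a))) h
    have left_gap : Tendsto (fun i => d (x i) a - d (x i) (x i)) l (𝓝 0) := by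
      simpa using h.sub right_gap
    have to_point : Tendsto (fun i => d (x i) a) l (𝓝 (d a a)) :=
      tendsto_sub_nhds_zero_iff.1 right_gap
    exact ⟨to_point, by simpa using to_point.sub left_gap⟩
  · rintro ⟨to_point, self⟩
    simpa using (to_point.sub_const (d a a)).add (to_point.sub self)

theorem tendsto_prod_of_tendsto_self (hd : IsPartialPseudometric d)
    (to_point : Tendsto (fun i => d (x i) a) l (𝓝 (d a a)))
    (self : Tendsto (fun i => d (x i) (x i)) l (𝓝 (d a a))) :
    Tendsto (fun p : ι × ι => d (x p.1) (x p.2)) (l ×ˢ l) (𝓝 (d a a)) := by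
  have upper : Tendsto (fun p : ι × ι => d (x p.1) a + d (x p.2) a - d a a) (l ×ˢ l)
      (𝓝 (d a a)) := by
    simpa using ((to_point.comp tendsto_fst).add (to_point.comp tendsto_snd)).sub_const (d a a)
  refine tendsto_of_tendsto_of_tendsto_of_le_of_le (self.comp tendsto_fst) upper
    (fun p => hd.self_le (x p.1) (x p.2)) fun p => ?_
  simpa only [hd.symm a] using hd.triangle (x p.1) a (x p.2)

end IsPartialPseudometric

theorem tendsto_prod_atTop_iff_dist_lt {α β : Type*} [PseudoMetricSpace α] [Nonempty β]
    [SemilatticeSup β] {f : β × β → α} {c : α} :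
    Tendsto f (atTop ×ˢ atTop) (𝓝 c) ↔
      ∀ ε : ℝ, 0 < ε → ∃ N : β, ∀ m n : β, N ≤ m → N ≤ n → dist (f (m, n)) c < ε := by
  simp only [Metric.tendsto_nhds, prod_atTop_atTop_eq, eventually_atTop_prod_self, gt_iff_lt]

theorem assocE_tendsto_iff_general {X ι : Type*} {d : X → X → ℝ} (hd : IsPartialPseudometric d)
    {l : Filter ι} (x : ι → X) (a : X) :
    Tendsto (fun i => assocE d (x i) a) l (𝓝 0) ↔
      Tendsto (fun i => d (x i) a) l (𝓝 (d a a)) ∧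
        Tendsto (fun p : ι × ι => d (x p.1) (x p.2)) (l ×ˢ l) (𝓝 (d a a)) := by
  rw [hd.tendsto_assocE_zero_iff_tendsto_self]
  exact and_congr_right fun to_point =>
    ⟨hd.tendsto_prod_of_tendsto_self to_point, fun pairs => pairs.comp tendsto_diag⟩

/-- characterization of `e`-convergence in terms of `d`. -/
theorem assocE_tendsto_iff {X : Type*} [Nonempty X] (d : X → X → ℝ)
    (hd : IsPartialMetric d) (x : ℕ → X) (a : X) :
    Tendsto (fun n => assocE d (x n) a) atTop (nhds 0) ↔
      (Tendsto (fun n => d (x n) a) atTop (nhds (d a a)) ∧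
        ∀ α : ℝ, 0 < α → ∃ p : ℕ, ∀ m n : ℕ, p ≤ m → p ≤ n →
          |d (x m) (x n) - d a a| < α) := by
  simpa only [tendsto_prod_atTop_iff_dist_lt, Real.dist_eq] using
    assocE_tendsto_iff_general hd.isPartialPseudometric (l := atTop) x a
end
end

section
/- Let d be a partial metric on a nonempty set X with associated metric e, and let (x_n) be a sequence in X. Then (x_n) is e-Cauchy (i.e., e(x_m,x_n) → 0 as m, n → ∞) if and only if there exists γ ∈ ℝ with γ ≥ 0 such that d(x_m, x_n) → γ as m, n → ∞ (doubly indexed convergence). -/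
open Filter Topology

noncomputable section

/-! The self-distances satisfy `|d(x, x) - d(y, y)| ≤ e(x, y)`, so they form a Cauchy family as soon
as `e(x, y) → 0`. If `γ` is their limit, then `d(x, y) = (e(x, y) + d(x, x) + d(y, y)) / 2` tends
to `(0 + γ + γ) / 2 = γ`. Conversely, a double limit `γ` of `d(x, y)` is also its limit along the
diagonal, so that `e(x, y) = 2 d(x, y) - d(x, x) - d(y, y)` tends to `2γ - γ - γ = 0`. -/

theorem tendsto_atTop_prod_self_nhds_iff {ι α : Type*} [Nonempty ι] [Preorder ι]
    [IsDirectedOrder ι] [PseudoMetricSpace α] {f : ι × ι → α} {a : α} :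
    Tendsto f (atTop ×ˢ atTop) (𝓝 a) ↔
      ∀ ε : ℝ, 0 < ε → ∃ p : ι, ∀ m n : ι, p ≤ m → p ≤ n → dist (f (m, n)) a < ε := by
  simp only [prod_atTop_atTop_eq, Metric.tendsto_nhds]
  refine forall₂_congr fun ε _ ↦ eventually_atTop_prod_self'.trans <| exists_congr fun p ↦ ?_
  exact ⟨fun h m n hm hn ↦ h m hm n hn, fun h m hm n hn ↦ h m n hm hn⟩

section SelfDistance

variable {X ι : Type*} {d : X → X → ℝ} {l : Filter ι} {u : ι → X}

theorem abs_self_sub_self_le_assocE (self_le : ∀ x y, max (d x x) (d y y) ≤ d x y) (x y : X) :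
    |d x x - d y y| ≤ assocE d x y := by
  obtain ⟨hx, hy⟩ := max_le_iff.1 (self_le x y)
  rw [abs_le, assocE]
  constructor <;> linarith

theorem assocE_nonneg (self_le : ∀ x y, max (d x x) (d y y) ≤ d x y) (x y : X) :
    0 ≤ assocE d x y :=
  (abs_nonneg _).trans (abs_self_sub_self_le_assocE self_le x y)

theorem cauchy_map_self_of_tendsto_assocE [l.NeBot]
    (self_le : ∀ x y, max (d x x) (d y y) ≤ d x y)
    (he : Tendsto (fun p : ι × ι ↦ assocE d (u p.1) (u p.2)) (l ×ˢ l) (𝓝 0)) :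
    Cauchy (map (fun i ↦ d (u i) (u i)) l) :=
  cauchy_map_iff'.2 <| tendsto_uniformity_iff_dist_tendsto_zero.2 <|
    squeeze_zero (fun _ ↦ dist_nonneg) (fun _ ↦ abs_self_sub_self_le_assocE self_le _ _) he

theorem tendsto_of_tendsto_assocE_of_tendsto_self {γ : ℝ}
    (he : Tendsto (fun p : ι × ι ↦ assocE d (u p.1) (u p.2)) (l ×ˢ l) (𝓝 0))
    (hself : Tendsto (fun i ↦ d (u i) (u i)) l (𝓝 γ)) :
    Tendsto (fun p : ι × ι ↦ d (u p.1) (u p.2)) (l ×ˢ l) (𝓝 γ) := by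
  have hlim := ((he.add (hself.comp tendsto_fst)).add (hself.comp tendsto_snd)).div_const 2
  convert hlim using 2
  · simp only [assocE, Function.comp_apply]
    ring
  · ring

theorem tendsto_assocE_zero_of_tendsto {γ : ℝ}
    (hd : Tendsto (fun p : ι × ι ↦ d (u p.1) (u p.2)) (l ×ˢ l) (𝓝 γ)) :
    Tendsto (fun p : ι × ι ↦ assocE d (u p.1) (u p.2)) (l ×ˢ l) (𝓝 0) := by
  have hself : Tendsto (fun i ↦ d (u i) (u i)) l (𝓝 γ) := hd.comp tendsto_diag
  have hlim := ((hd.const_mul 2).sub (hself.comp tendsto_fst)).sub (hself.comp tendsto_snd)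
  rwa [show 2 * γ - γ - γ = 0 by ring] at hlim

theorem eCauchy_iff_dist_converges_general [l.NeBot] (self_nonneg : ∀ x, 0 ≤ d x x)
    (self_le : ∀ x y, max (d x x) (d y y) ≤ d x y) (u : ι → X) :
    Tendsto (fun p : ι × ι ↦ assocE d (u p.1) (u p.2)) (l ×ˢ l) (𝓝 0) ↔
      ∃ γ : ℝ, 0 ≤ γ ∧ Tendsto (fun p : ι × ι ↦ d (u p.1) (u p.2)) (l ×ˢ l) (𝓝 γ) := by
  constructor
  · intro he
    obtain ⟨γ, hself⟩ := CompleteSpace.complete (cauchy_map_self_of_tendsto_assocE self_le he)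
    have hγ : 0 ≤ γ := ge_of_tendsto' hself fun i ↦ self_nonneg (u i)
    exact ⟨γ, hγ, tendsto_of_tendsto_assocE_of_tendsto_self he hself⟩
  · rintro ⟨γ, -, hd⟩
    exact tendsto_assocE_zero_of_tendsto hd

end SelfDistance

/-- a sequence is `e`-Cauchy iff `d(x_m, x_n)` converges (doubly indexed). -/
theorem eCauchy_iff_dist_converges {X : Type*} [Nonempty X] (d : X → X → ℝ)
    (hd : IsPartialMetric d) (x : ℕ → X) :
    (∀ α : ℝ, 0 < α → ∃ p : ℕ, ∀ m n : ℕ, p ≤ m → p ≤ n →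
        assocE d (x m) (x n) < α) ↔
      ∃ γ : ℝ, 0 ≤ γ ∧ ∀ α : ℝ, 0 < α → ∃ p : ℕ, ∀ m n : ℕ, p ≤ m → p ≤ n →
        |d (x m) (x n) - γ| < α := by
  obtain ⟨nonneg, -, self_le, -, -⟩ := hd
  simpa only [tendsto_atTop_prod_self_nhds_iff, Real.dist_eq, sub_zero,
    abs_of_nonneg (assocE_nonneg self_le _ _)] using
    eCauchy_iff_dist_converges_general (l := atTop) (fun y ↦ nonneg y y) self_le x
end
end

section
/- Let d be a partial metric on a nonempty set X with associated metric e, let (x_n)_{n ≥ 0} be a sequence in X, and let γ ≥ 0 be such that: d(x_n, x_n) → γ and d(x_n, x_{n+1}) → γ as n → ∞, with d(x_n,x_n) ≥ γ and d(x_n,x_{n+1}) ≥ γ for all sufficiently large n (e-semi-Cauchy). If (x_n) is not e-Cauchy, then there exist ε > 0, a rank j₀, and functions m, n : ℕ → ℕ such that: (1) j ≤ m(j) ≤ n(j) and d(x_{m(j)}, x_{n(j)}) ≥ γ + ε for all j ≥ j₀; (2) n(j) − m(j) ≥ 2 and d(x_{m(j)}, x_{n(j)−1}) < γ + ε for all sufficiently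 large j; (3) d(x_{m(j)}, x_{n(j)}) → γ + ε as j → ∞; (4) for each p, q ∈ {0,1}, d(x_{m(j)+p}, x_{n(j)+q}) → γ + ε as j → ∞. -/
open Filter Topology

noncomputable section

/-!
For a symmetric `d` satisfying the partial triangle inequality, the distance to a point `y` changes
by at most `d a b - d a a` above and `d a b - d b b` below when `a` is replaced by `b`. Both bounds
vanish along consecutive terms of the sequence, so bounded index shifts do not affect limits of
distances. If the sequence is not `e`-Cauchy, then, self-distances tending to `γ`, there are
`ε > 0` and arbitrarily late pairs `m ≤ n` with `d (x m) (x n) ≥ γ + ε`. Taking `n` least for given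
`m`, the distance from `x m` crosses the level `γ + ε` between `n - 1` and `n`, overshooting it by
a vanishing amount.
-/

lemma exists_first_ge {α : Type*} [LinearOrder α] {f : ℕ → α} {c : α} {m : ℕ}
    (h : ∃ n, m ≤ n ∧ c ≤ f n) :
    ∃ n, m ≤ n ∧ c ≤ f n ∧ ∀ i, m ≤ i → i < n → f i < c := by
  classical
  obtain ⟨hle, hge⟩ := Nat.find_spec h
  exact ⟨Nat.find h, hle, hge, fun i hmi hi =>
    not_le.mp fun hci => Nat.find_min h hi ⟨hmi, hci⟩⟩

section PartialTriangle

variable {X ι : Type*} {d : X → X → ℝ} {l : Filter ι} {γ : ℝ}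

lemma tendsto_of_asymptotic_left (hsymm : ∀ x y, d x y = d y x)
    (htri : ∀ x y z, d x z ≤ d x y + d y z - d y y) {a b y : ι → X} {L : ℝ}
    (ha : Tendsto (fun i => d (a i) (a i)) l (𝓝 γ))
    (hb : Tendsto (fun i => d (b i) (b i)) l (𝓝 γ))
    (hab : Tendsto (fun i => d (a i) (b i)) l (𝓝 γ))
    (hay : Tendsto (fun i => d (a i) (y i)) l (𝓝 L)) :
    Tendsto (fun i => d (b i) (y i)) l (𝓝 L) := by
  have lower : Tendsto (fun i => d (a i) (y i) - (d (a i) (b i) - d (b i) (b i))) l (𝓝 L) := by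
    simpa using hay.sub (hab.sub hb)
  have upper : Tendsto (fun i => d (a i) (y i) + (d (a i) (b i) - d (a i) (a i))) l (𝓝 L) := by
    simpa using hay.add (hab.sub ha)
  refine tendsto_of_tendsto_of_tendsto_of_le_of_le lower upper (fun i => ?_) (fun i => ?_)
  · linarith [htri (a i) (b i) (y i)]
  · linarith [htri (b i) (a i) (y i), hsymm (a i) (b i)]

lemma tendsto_of_crossing (htri : ∀ x y z, d x z ≤ d x y + d y z - d y y) {y a b : ι → X} {c : ℝ}
    (ha : Tendsto (fun i => d (a i) (a i)) l (𝓝 γ))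
    (hab : Tendsto (fun i => d (a i) (b i)) l (𝓝 γ))
    (hya : ∀ᶠ i in l, d (y i) (a i) < c) (hyb : ∀ᶠ i in l, c ≤ d (y i) (b i)) :
    Tendsto (fun i => d (y i) (b i)) l (𝓝 c) := by
  have upper : Tendsto (fun i => c + (d (a i) (b i) - d (a i) (a i))) l (𝓝 c) := by
    simpa using (hab.sub ha).const_add c
  refine tendsto_of_tendsto_of_tendsto_of_le_of_le' tendsto_const_nhds upper hyb ?_
  filter_upwards [hya] with i hi
  linarith [htri (y i) (a i) (b i)]

variable {x : ℕ → X}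

lemma tendsto_shift_left (hsymm : ∀ x y, d x y = d y x)
    (htri : ∀ x y z, d x z ≤ d x y + d y z - d y y)
    (hself : Tendsto (fun n => d (x n) (x n)) atTop (𝓝 γ))
    (hsucc : Tendsto (fun n => d (x n) (x (n + 1))) atTop (𝓝 γ))
    {u : ι → ℕ} (hu : Tendsto u l atTop) {y : ι → X} {L : ℝ}
    (h : Tendsto (fun i => d (x (u i)) (y i)) l (𝓝 L)) (p : ℕ) :
    Tendsto (fun i => d (x (u i + p)) (y i)) l (𝓝 L) := by
  induction p with
  | zero => exact h
  | succ p ih =>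
    have hup : Tendsto (fun i => u i + p) l atTop := (tendsto_add_atTop_nat p).comp hu
    exact tendsto_of_asymptotic_left hsymm htri (hself.comp hup)
      (hself.comp ((tendsto_add_atTop_nat 1).comp hup)) (hsucc.comp hup) ih

lemma tendsto_shift_shift (hsymm : ∀ x y, d x y = d y x)
    (htri : ∀ x y z, d x z ≤ d x y + d y z - d y y)
    (hself : Tendsto (fun n => d (x n) (x n)) atTop (𝓝 γ))
    (hsucc : Tendsto (fun n => d (x n) (x (n + 1))) atTop (𝓝 γ))
    {u v : ι → ℕ} (hu : Tendsto u l atTop) (hv : Tendsto v l atTop) {L : ℝ}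
    (h : Tendsto (fun i => d (x (u i)) (x (v i))) l (𝓝 L)) (p q : ℕ) :
    Tendsto (fun i => d (x (u i + p)) (x (v i + q))) l (𝓝 L) := by
  have hleft := tendsto_shift_left hsymm htri hself hsucc hu h p
  simp only [hsymm (x (u _ + p))] at hleft ⊢
  exact tendsto_shift_left hsymm htri hself hsucc hv hleft q

lemma exists_far_pairs_of_not_cauchy (hsymm : ∀ x y, d x y = d y x)
    (hself : Tendsto (fun n => d (x n) (x n)) atTop (𝓝 γ))
    (hnc : ¬ ∀ α : ℝ, 0 < α → ∃ p : ℕ, ∀ m n : ℕ, p ≤ m → p ≤ n → assocE d (x m) (x n) < α) :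
    ∃ ε : ℝ, 0 < ε ∧ ∀ p : ℕ, ∃ m, p ≤ m ∧ ∃ n, m ≤ n ∧ γ + ε ≤ d (x m) (x n) := by
  push Not at hnc
  obtain ⟨α, hα, hfar⟩ := hnc
  obtain ⟨k, hk⟩ : ∃ k, ∀ n ≥ k, γ - α / 4 < d (x n) (x n) :=
    eventually_atTop.mp (hself.eventually_const_lt (by linarith))
  refine ⟨α / 4, by positivity, fun p => ?_⟩
  obtain ⟨m, n, hm, hn, hmn⟩ := hfar (max p k)
  obtain ⟨hpm, hkm⟩ := max_le_iff.mp hm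
  obtain ⟨hpn, hkn⟩ := max_le_iff.mp hn
  have hdist : γ + α / 4 ≤ d (x m) (x n) := by
    unfold assocE at hmn
    linarith [hk m hkm, hk n hkn]
  rcases le_total m n with h | h
  · exact ⟨m, hpm, n, h, hdist⟩
  · exact ⟨n, hpn, m, h, hsymm (x m) (x n) ▸ hdist⟩

lemma eventually_two_le_sub (hself : Tendsto (fun n => d (x n) (x n)) atTop (𝓝 γ))
    (hsucc : Tendsto (fun n => d (x n) (x (n + 1))) atTop (𝓝 γ))
    {m n : ι → ℕ} (hm : Tendsto m l atTop) {c : ℝ} (hc : γ < c)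
    (hmn : ∀ i, m i ≤ n i) (hge : ∀ i, c ≤ d (x (m i)) (x (n i))) :
    ∀ᶠ i in l, 2 ≤ n i - m i := by
  filter_upwards [hm.eventually (hself.eventually_lt_const hc),
    hm.eventually (hsucc.eventually_lt_const hc)] with i hlt_self hlt_succ
  have hne : n i ≠ m i := fun h => (h ▸ hge i).not_gt hlt_self
  have hne_succ : n i ≠ m i + 1 := fun h => (h ▸ hge i).not_gt hlt_succ
  have hle := hmn i
  omega

theorem semiCauchy_not_cauchy_general (hsymm : ∀ x y, d x y = d y x)
    (htri : ∀ x y z, d x z ≤ d x y + d y z - d y y)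
    (hself : Tendsto (fun n => d (x n) (x n)) atTop (𝓝 γ))
    (hsucc : Tendsto (fun n => d (x n) (x (n + 1))) atTop (𝓝 γ))
    (hnc : ¬ ∀ α : ℝ, 0 < α → ∃ p : ℕ, ∀ m n : ℕ, p ≤ m → p ≤ n → assocE d (x m) (x n) < α) :
    ∃ ε : ℝ, 0 < ε ∧ ∃ m n : ℕ → ℕ,
      (∀ j, j ≤ m j ∧ m j ≤ n j ∧ γ + ε ≤ d (x (m j)) (x (n j))) ∧
      (∀ᶠ j in atTop, 2 ≤ n j - m j ∧ d (x (m j)) (x (n j - 1)) < γ + ε) ∧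
      ∀ p q : ℕ, Tendsto (fun j => d (x (m j + p)) (x (n j + q))) atTop (𝓝 (γ + ε)) := by
  obtain ⟨ε, hε, hfar⟩ := exists_far_pairs_of_not_cauchy hsymm hself hnc
  choose m hjm hexists using hfar
  choose n hmn hge hlt using fun j => exists_first_ge (hexists j)
  have hm : Tendsto m atTop atTop := tendsto_atTop_mono hjm tendsto_id
  have hn : Tendsto n atTop atTop := tendsto_atTop_mono hmn hm
  have hn_pred : Tendsto (fun j => n j - 1) atTop atTop := (tendsto_sub_atTop_nat 1).comp hn
  have hgap : ∀ᶠ j in atTop, 2 ≤ n j - m j :=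
    eventually_two_le_sub hself hsucc hm (by linarith) hmn hge
  have hbelow : ∀ᶠ j in atTop, d (x (m j)) (x (n j - 1)) < γ + ε :=
    hgap.mono fun j hj => hlt j _ (by omega) (by omega)
  have hpred_dist : Tendsto (fun j => d (x (n j - 1)) (x (n j))) atTop (𝓝 γ) := by
    refine (hsucc.comp hn_pred).congr' (hgap.mono fun j hj => ?_)
    rw [Function.comp_apply, Nat.sub_add_cancel (by omega)]
  have hlim : Tendsto (fun j => d (x (m j)) (x (n j))) atTop (𝓝 (γ + ε)) :=
    tendsto_of_crossing htri (hself.comp hn_pred) hpred_dist hbelow (.of_forall hge)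
  exact ⟨ε, hε, m, n, fun j => ⟨hjm j, hmn j, hge j⟩, hgap.and hbelow,
    tendsto_shift_shift hsymm htri hself hsucc hm hn hlim⟩

end PartialTriangle

/-- structure of `e`-semi-Cauchy sequences which are not `e`-Cauchy. -/
theorem semiCauchy_not_cauchy {X : Type*} [Nonempty X] (d : X → X → ℝ)
    (hd : IsPartialMetric d) (x : ℕ → X) (γ : ℝ) (hγ : 0 ≤ γ)
    (hα : Tendsto (fun n => d (x n) (x n)) atTop (nhds γ))
    (hρ : Tendsto (fun n => d (x n) (x (n + 1))) atTop (nhds γ))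
    (hge : ∃ k : ℕ, ∀ n : ℕ, k ≤ n →
      γ ≤ d (x n) (x n) ∧ γ ≤ d (x n) (x (n + 1)))
    (hnc : ¬ (∀ α : ℝ, 0 < α → ∃ p : ℕ, ∀ m n : ℕ, p ≤ m → p ≤ n →
      assocE d (x m) (x n) < α)) :
    ∃ ε : ℝ, 0 < ε ∧ ∃ j₀ : ℕ, ∃ m n : ℕ → ℕ,
      (∀ j : ℕ, j₀ ≤ j →
        j ≤ m j ∧ m j ≤ n j ∧ γ + ε ≤ d (x (m j)) (x (n j))) ∧
      (∃ j₁ : ℕ, ∀ j : ℕ, j₁ ≤ j →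
        2 ≤ n j - m j ∧ d (x (m j)) (x (n j - 1)) < γ + ε) ∧
      Tendsto (fun j => d (x (m j)) (x (n j))) atTop (nhds (γ + ε)) ∧
      (∀ p q : ℕ, p ≤ 1 → q ≤ 1 →
        Tendsto (fun j => d (x (m j + p)) (x (n j + q))) atTop (nhds (γ + ε))) := by
  obtain ⟨-, hsymm, -, htri, -⟩ := hd
  obtain ⟨ε, hε, m, n, hfar, hgap, hlim⟩ := semiCauchy_not_cauchy_general hsymm htri hα hρ hnc
  exact ⟨ε, hε, 0, m, n, fun j _ => hfar j, eventually_atTop.mp hgap, hlim 0 0,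
    fun p q _ _ => hlim p q⟩
end
end

section
/- Let d be a partial metric on a nonempty set X whose associated metric space (X,e) is complete, let φ : [0,∞) → [0,∞) be right limit normal, and let T : X → X be (M;c;φ)-contractive, i.e., d(Tx,Ty) ≤ max{φ(M(x,y)), c(x,y)} for all x, y ∈ X. Then T is a d-Picard operator: for every x ∈ X there exists x* ∈ X such that e(Tⁿx, x*) → 0 as n → ∞ and d(x*, Tx*) = d(x*, x*), i.e., x* is a d-fixed point of T. -/
open Filter Topology

noncomputable section

/-!
Along an orbit `u` the displacements `d(uₙ, Tuₙ)` decrease to some `β ≥ 0`. The contraction either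
pushes a distance below `φ(M)` or leaves it below a self-distance, so `d(uₙ, uₙ) ≥ β` eventually.
Since displacements are then arbitrarily close to self-distances, `T` keeps late orbit points inside
a `d`-ball of radius slightly more than `β` about any of them; hence `d(uₘ, uₙ) → β` and `u` is
`e`-Cauchy. If `u` `e`-converges to `z` and `d(z, z) < d(z, Tz)`, then `M(uₙ, z) = d(z, Tz)`
eventually, and the contraction gives in the limit
`d(z, Tz) ≤ max {φ(d(z, Tz)), d(z, z)} < d(z, Tz)`.
-/

section PartialPseudometric

variable {X : Type*} {d : X → X → ℝ}

/-- A partial pseudometric: a partial metric without the separation axiom, as a pseudometric is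
a metric without it. -/
structure IsPartialPseudometric_s12 (d : X → X → ℝ) : Prop where
  nonneg : ∀ x y, 0 ≤ d x y
  symm : ∀ x y, d x y = d y x
  self_le : ∀ x y, d x x ≤ d x y
  triangle : ∀ x y z, d x z ≤ d x y + d y z - d y y

theorem IsPartialMetric.isPartialPseudometric_s12 (hd : IsPartialMetric d) :
    IsPartialPseudometric_s12 d where
  nonneg := hd.1
  symm := hd.2.1
  self_le x y := (le_max_left _ _).trans (hd.2.2.1 x y)
  triangle := hd.2.2.2.1

namespace IsPartialPseudometric_s12

theorem assocE_comm (hd : IsPartialPseudometric_s12 d) (x y : X) : assocE d x y = assocE d y x := by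
  unfold assocE
  linarith [hd.symm x y]

theorem sub_self_le_assocE (hd : IsPartialPseudometric_s12 d) (x y : X) :
    d x y - d x x ≤ assocE d x y := by
  unfold assocE
  linarith [hd.symm x y, hd.self_le y x]

theorem le_add_assocE (hd : IsPartialPseudometric_s12 d) (x y x' y' : X) :
    d x y ≤ d x' y' + (assocE d x x' + assocE d y y') := by
  linarith [hd.triangle x x' y, hd.triangle x' y' y, hd.symm x x', hd.symm y y',
    hd.assocE_comm x x', hd.assocE_comm y y',
    hd.sub_self_le_assocE x' x, hd.sub_self_le_assocE y' y]

theorem abs_sub_le_assocE_add (hd : IsPartialPseudometric_s12 d) (x y x' y' : X) :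
    |d x y - d x' y'| ≤ assocE d x x' + assocE d y y' := by
  rw [abs_sub_le_iff]
  constructor <;>
    linarith [hd.le_add_assocE x y x' y', hd.le_add_assocE x' y' x y,
      hd.assocE_comm x x', hd.assocE_comm y y']

theorem tendsto_of_tendsto_assocE (hd : IsPartialPseudometric_s12 d) {ι : Type*} {l : Filter ι}
    {u v : ι → X} {x y : X} (hu : Tendsto (fun i => assocE d (u i) x) l (𝓝 0))
    (hv : Tendsto (fun i => assocE d (v i) y) l (𝓝 0)) :
    Tendsto (fun i => d (u i) (v i)) l (𝓝 (d x y)) := by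
  have hsum := hu.add hv
  rw [add_zero] at hsum
  exact tendsto_iff_norm_sub_tendsto_zero.2 <|
    squeeze_zero_norm' (.of_forall fun i => by
      simpa using hd.abs_sub_le_assocE_add (u i) (v i) x y) hsum

end IsPartialPseudometric_s12

end PartialPseudometric

section Gauge

variable {φ : ℝ → ℝ}

/-- A gauge of Meir–Keeler type on `[0, ∞)`: every level `s > 0` bounds `φ` strictly on `[0, s]`
and a bit beyond. -/
def IsMeirKeelerGauge (φ : ℝ → ℝ) : Prop :=
  ∀ s, 0 < s → ∃ δ, 0 < δ ∧ ∀ t, 0 ≤ t → t < s + δ → φ t < s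

theorem IsMeirKeelerGauge.apply_lt (hφ : IsMeirKeelerGauge φ) {t : ℝ} (ht : 0 < t) : φ t < t := by
  obtain ⟨δ, hδ, hlt⟩ := hφ t ht
  exact hlt t ht.le (lt_add_of_pos_right t hδ)

theorem exists_forall_Ico_lt_of_rightLimsup_lt {s c : ℝ} (hφ : ∀ t, s ≤ t → φ t ≤ t)
    (h : rightLimsup φ s < c) : ∃ δ, 0 < δ ∧ ∀ t ∈ Set.Ico s (s + δ), φ t < c := by
  obtain ⟨_, ⟨δ, hδ, rfl⟩, hlt⟩ := exists_lt_of_csInf_lt (by exact ⟨_, 1, one_pos, rfl⟩) h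
  have hbdd : BddAbove (φ '' Set.Ico s (s + δ)) :=
    ⟨s + δ, Set.forall_mem_image.2 fun t ht => (hφ t ht.1).trans ht.2.le⟩
  exact ⟨δ, hδ, fun t ht => (le_csSup hbdd (Set.mem_image_of_mem φ ht)).trans_lt hlt⟩

theorem IsRightLimitNormal.isMeirKeelerGauge (hφ : IsRightLimitNormal φ) :
    IsMeirKeelerGauge φ := by
  obtain ⟨⟨-, hzero, hlt⟩, hlim⟩ := hφ
  intro s hs
  obtain ⟨δ, hδ, hright⟩ := exists_forall_Ico_lt_of_rightLimsup_lt
    (fun t hst => (hlt t (hs.trans_le hst)).le) (hlim s hs)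
  refine ⟨δ, hδ, fun t ht htδ => ?_⟩
  rcases le_or_gt s t with hst | hts
  · exact hright t ⟨hst, htδ⟩
  · rcases ht.eq_or_lt with rfl | htpos
    · exact hzero.trans_lt hs
    · exact (hlt t htpos).trans hts

end Gauge

section Contraction

variable {X : Type*} {d : X → X → ℝ} {φ : ℝ → ℝ} {T : X → X}

/-- `T` is `(M;c;φ)`-contractive; `c(x,y)` is written out as `max (d x x) (d y y)`. -/
def IsMCContractive (d : X → X → ℝ) (φ : ℝ → ℝ) (T : X → X) : Prop :=
  ∀ x y : X, d (T x) (T y) ≤ max (φ (Mfun d T x y)) (max (d x x) (d y y))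

namespace IsPartialPseudometric_s12

theorem Mfun_nonneg (hd : IsPartialPseudometric_s12 d) (x y : X) : 0 ≤ Mfun d T x y :=
  (hd.nonneg x y).trans <| (le_max_left _ _).trans (le_max_left _ _)

theorem Mfun_self (hd : IsPartialPseudometric_s12 d) (x : X) : Mfun d T x x = d x (T x) := by
  unfold Mfun
  rw [hd.symm (T x) x, max_self, max_eq_right (hd.self_le _ _), add_self_div_two, max_self]

theorem Mfun_map_right (hd : IsPartialPseudometric_s12 d) (x : X) :
    Mfun d T x (T x) = max (d x (T x)) (d (T x) (T (T x))) := by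
  unfold Mfun
  rw [← max_assoc, max_self]
  apply max_eq_left
  linarith [hd.triangle x (T x) (T (T x)), le_max_left (d x (T x)) (d (T x) (T (T x))),
    le_max_right (d x (T x)) (d (T x) (T (T x)))]

end IsPartialPseudometric_s12

namespace IsMCContractive

theorem displacement_map_le (hT : IsMCContractive d φ T) (hd : IsPartialPseudometric_s12 d)
    (hφ : ∀ t, 0 < t → φ t < t) (x : X) : d (T x) (T (T x)) ≤ d x (T x) := by
  by_contra! hlt
  have hcontr := hT x (T x)
  rw [hd.Mfun_map_right, max_eq_right hlt.le] at hcontr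
  have hself : max (d x x) (d (T x) (T x)) ≤ d x (T x) :=
    max_le (hd.self_le _ _) ((hd.self_le _ _).trans_eq (hd.symm _ _))
  exact hcontr.not_gt <| max_lt (hφ _ ((hd.nonneg _ _).trans_lt hlt)) (hself.trans_lt hlt)

theorem displacement_map_le_max (hT : IsMCContractive d φ T) (hd : IsPartialPseudometric_s12 d)
    (hφ : ∀ t, 0 < t → φ t < t) (x : X) :
    d (T x) (T (T x)) ≤ max (φ (d x (T x))) (d x x) := by
  have hself : d (T x) (T x) ≤ max (φ (d x (T x))) (d x x) := by
    simpa only [hd.Mfun_self, max_self] using hT x x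
  have hcontr := hT x (T x)
  rw [hd.Mfun_map_right, max_eq_left (hT.displacement_map_le hd hφ x)] at hcontr
  exact hcontr.trans <| max_le (le_max_left _ _) (max_le (le_max_right _ _) hself)

theorem dist_map_lt_of_dist_lt (hT : IsMCContractive d φ T) (hd : IsPartialPseudometric_s12 d)
    {β s η : ℝ} (hφ : ∀ t, 0 ≤ t → t < s + 2 * η → φ t < s) (hs : β + η ≤ s) {x y : X}
    (hx : β ≤ d x x) (hTx : β ≤ d (T x) (T x)) (hxT : d x (T x) < β + η)
    (hy : β ≤ d y y) (hyT : d y (T y) < β + η) (hxy : d x y < s + η) :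
    d x (T y) < s + η := by
  have hM : Mfun d T x y < s + 2 * η := by
    refine max_lt (max_lt ?_ (max_lt ?_ ?_)) ?_ <;>
      linarith [hd.self_le x (T x), hd.triangle x y (T y), hd.triangle (T x) x y,
        hd.symm (T x) x]
  have himages : d (T x) (T y) < s :=
    (hT x y).trans_lt <| max_lt (hφ _ (hd.Mfun_nonneg x y) hM) <|
      max_lt (by linarith [hd.self_le x (T x)]) (by linarith [hd.self_le y (T y)])
  linarith [hd.triangle x (T x) (T y)]

theorem displacement_eq_self_of_tendsto {ι : Type*} {l : Filter ι} [l.NeBot]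
    (hT : IsMCContractive d φ T) (hd : IsPartialPseudometric_s12 d) (hφ : ∀ t, 0 < t → φ t < t)
    {u : ι → X} {z : X} (hu : Tendsto (fun i => assocE d (u i) z) l (𝓝 0))
    (hTu : Tendsto (fun i => assocE d (T (u i)) z) l (𝓝 0)) :
    d z (T z) = d z z := by
  have hconst (y : X) : Tendsto (fun _ : ι => assocE d y y) l (𝓝 0) := by
    simp [assocE, two_mul]
  by_contra hne
  have hlt : d z z < d z (T z) := (hd.self_le z (T z)).lt_of_ne' hne
  have hM : ∀ᶠ i in l, Mfun d T (u i) z = d z (T z) := by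
    have hmid : (d z (T z) + d z z) / 2 < d z (T z) := by linarith
    have hmean : Tendsto (fun i => (d (u i) (T z) + d (T (u i)) z) / 2) l
        (𝓝 ((d z (T z) + d z z) / 2)) :=
      ((hd.tendsto_of_tendsto_assocE hu (hconst (T z))).add
        (hd.tendsto_of_tendsto_assocE hTu (hconst z))).div_const 2
    filter_upwards [(hd.tendsto_of_tendsto_assocE hu (hconst z)).eventually_lt_const hlt,
      (hd.tendsto_of_tendsto_assocE hu hTu).eventually_lt_const hlt,
      hmean.eventually_lt_const hmid] with i hdist hdisp hmean
    unfold Mfun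
    rw [max_eq_right hdisp.le, max_eq_right hdist.le, max_eq_left hmean.le]
  have hlim : d z (T z) ≤ max (φ (d z (T z))) (max (d z z) (d z z)) :=
    le_of_tendsto_of_tendsto (hd.tendsto_of_tendsto_assocE hTu (hconst (T z)))
      (tendsto_const_nhds.max ((hd.tendsto_of_tendsto_assocE hu hu).max tendsto_const_nhds))
      (hM.mono fun i hi => hi ▸ hT (u i) z)
  rw [max_self] at hlim
  exact hlim.not_gt <| max_lt (hφ _ ((hd.nonneg z z).trans_lt hlt)) hlt

end IsMCContractive

end Contraction

section Orbit

variable {X : Type*} {d : X → X → ℝ} {φ : ℝ → ℝ} {T : X → X}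

/-- The infimum of the displacements along the orbit of `x`, which for a contractive map is
their limit. -/
def orbitGap (d : X → X → ℝ) (T : X → X) (x : X) : ℝ :=
  ⨅ n : ℕ, d (T^[n] x) (T (T^[n] x))

namespace IsPartialPseudometric_s12

theorem orbitGap_nonneg (hd : IsPartialPseudometric_s12 d) (x : X) : 0 ≤ orbitGap d T x :=
  Real.iInf_nonneg fun _ => hd.nonneg _ _

theorem bddBelow_range_displacement (hd : IsPartialPseudometric_s12 d) (x : X) :
    BddBelow (Set.range fun n => d (T^[n] x) (T (T^[n] x))) :=
  ⟨0, Set.forall_mem_range.2 fun _ => hd.nonneg _ _⟩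

theorem orbitGap_le_displacement (hd : IsPartialPseudometric_s12 d) (x : X) (n : ℕ) :
    orbitGap d T x ≤ d (T^[n] x) (T (T^[n] x)) :=
  ciInf_le (hd.bddBelow_range_displacement x) n

end IsPartialPseudometric_s12

namespace IsMCContractive

theorem antitone_displacement (hT : IsMCContractive d φ T) (hd : IsPartialPseudometric_s12 d)
    (hφ : ∀ t, 0 < t → φ t < t) (x : X) : Antitone fun n => d (T^[n] x) (T (T^[n] x)) :=
  antitone_nat_of_succ_le fun n => by
    simpa only [Function.iterate_succ_apply'] using hT.displacement_map_le hd hφ (T^[n] x)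

theorem tendsto_displacement (hT : IsMCContractive d φ T) (hd : IsPartialPseudometric_s12 d)
    (hφ : ∀ t, 0 < t → φ t < t) (x : X) :
    Tendsto (fun n => d (T^[n] x) (T (T^[n] x))) atTop (𝓝 (orbitGap d T x)) :=
  tendsto_atTop_ciInf (hT.antitone_displacement hd hφ x) (hd.bddBelow_range_displacement x)

theorem eventually_orbitGap_le_self (hT : IsMCContractive d φ T) (hd : IsPartialPseudometric_s12 d)
    (hφ : IsMeirKeelerGauge φ) (x : X) :
    ∀ᶠ n in atTop, orbitGap d T x ≤ d (T^[n] x) (T^[n] x) := by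
  rcases (hd.orbitGap_nonneg (T := T) x).eq_or_lt with hzero | hpos
  · exact .of_forall fun n => hzero ▸ hd.nonneg _ _
  · obtain ⟨δ, hδ, hlt⟩ := hφ _ hpos
    filter_upwards [(hT.tendsto_displacement hd (fun _ => hφ.apply_lt) x).eventually_lt_const
      (lt_add_of_pos_right _ hδ)] with n hn
    have hgap : orbitGap d T x ≤ d (T (T^[n] x)) (T (T (T^[n] x))) := by
      simpa only [Function.iterate_succ_apply'] using hd.orbitGap_le_displacement x (n + 1)
    have hmax := hgap.trans (hT.displacement_map_le_max hd (fun _ => hφ.apply_lt) (T^[n] x))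
    exact (le_max_iff.1 hmax).resolve_left (hlt _ (hd.nonneg _ _) hn).not_ge

theorem exists_forall_dist_iterate_lt (hT : IsMCContractive d φ T)
    (hd : IsPartialPseudometric_s12 d) (hφ : IsMeirKeelerGauge φ) (x : X) {ε : ℝ} (hε : 0 < ε) :
    ∃ N, ∀ m n, N ≤ m → m ≤ n → d (T^[m] x) (T^[n] x) < orbitGap d T x + ε := by
  set β := orbitGap d T x
  obtain ⟨δ, hδ, hlt⟩ := hφ (β + ε / 2) (by linarith [hd.orbitGap_nonneg (T := T) x])
  obtain ⟨η, hη, hηε, hηδ⟩ : ∃ η, 0 < η ∧ η ≤ ε / 2 ∧ η ≤ δ / 2 :=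
    ⟨min (ε / 2) (δ / 2), by positivity, min_le_left _ _, min_le_right _ _⟩
  obtain ⟨N, hN⟩ := eventually_atTop.1 <| (hT.eventually_orbitGap_le_self hd hφ x).and <|
    (hT.tendsto_displacement hd (fun _ => hφ.apply_lt) x).eventually_lt_const
      (lt_add_of_pos_right β hη)
  refine ⟨N, fun m n hNm hmn => ?_⟩
  obtain ⟨hself, hdisp⟩ := hN m hNm
  suffices d (T^[m] x) (T^[n] x) < β + ε / 2 + η by linarith
  induction n, hmn using Nat.le_induction with
  | base => linarith [hd.self_le (T^[m] x) (T (T^[m] x))]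
  | succ n hmn ih =>
    have hselfmap : β ≤ d (T (T^[m] x)) (T (T^[m] x)) := by
      simpa only [Function.iterate_succ_apply'] using (hN (m + 1) (by omega)).1
    obtain ⟨hself', hdisp'⟩ := hN n (hNm.trans hmn)
    rw [Function.iterate_succ_apply']
    exact hT.dist_map_lt_of_dist_lt hd (fun t ht htη => hlt t ht (by linarith)) (by linarith)
      hself hselfmap hdisp hself' hdisp' ih

theorem cauchy_iterate (hT : IsMCContractive d φ T) (hd : IsPartialPseudometric_s12 d)
    (hφ : IsMeirKeelerGauge φ) (x : X) {α : ℝ} (hα : 0 < α) :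
    ∃ p, ∀ m n, p ≤ m → p ≤ n → assocE d (T^[m] x) (T^[n] x) < α := by
  obtain ⟨N, hN⟩ := hT.exists_forall_dist_iterate_lt hd hφ x (half_pos hα)
  obtain ⟨N', hN'⟩ := eventually_atTop.1 (hT.eventually_orbitGap_le_self hd hφ x)
  refine ⟨max N N', fun m n hm hn => ?_⟩
  wlog hmn : m ≤ n generalizing m n
  · rw [hd.assocE_comm]
    exact this n m hn hm (le_of_not_ge hmn)
  unfold assocE
  linarith [hN m n (le_of_max_le_left hm) hmn, hN' m (le_of_max_le_right hm),
    hN' n (le_of_max_le_right hn)]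

end IsMCContractive

end Orbit

theorem dPicard_operator_general {X : Type*} {d : X → X → ℝ} (hd : IsPartialPseudometric_s12 d)
    (hcomp : eComplete d) {φ : ℝ → ℝ} (hφ : IsMeirKeelerGauge φ) {T : X → X}
    (hT : IsMCContractive d φ T) (x : X) :
    ∃ z : X, Tendsto (fun n => assocE d (T^[n] x) z) atTop (𝓝 0) ∧ d z (T z) = d z z := by
  obtain ⟨z, hz⟩ := hcomp (fun n => T^[n] x) fun _ => hT.cauchy_iterate hd hφ x
  have hTz : Tendsto (fun n => assocE d (T (T^[n] x)) z) atTop (𝓝 0) := by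
    simpa only [Function.iterate_succ_apply'] using (tendsto_add_atTop_iff_nat 1).2 hz
  exact ⟨z, hz, hT.displacement_eq_self_of_tendsto hd (fun _ => hφ.apply_lt) hz hTz⟩

/-- an `(M;c;φ)`-contractive map on a complete space is a `d`-Picard
operator: every Picard sequence `e`-converges to a `d`-fixed point. -/
theorem dPicard_operator {X : Type*} [Nonempty X] (d : X → X → ℝ)
    (hd : IsPartialMetric d) (hcomp : eComplete d)
    (φ : ℝ → ℝ) (hφ : IsRightLimitNormal φ) (T : X → X)
    (hT : ∀ x y : X, d (T x) (T y) ≤ max (φ (Mfun d T x y)) (max (d x x) (d y y))) :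
    ∀ x : X, ∃ xstar : X,
      Tendsto (fun n => assocE d (T^[n] x) xstar) atTop (nhds 0) ∧
      d xstar (T xstar) = d xstar xstar :=
  dPicard_operator_general hd.isPartialPseudometric_s12 hcomp hφ.isMeirKeelerGauge hT
end
end

section
/- Let d be a partial metric on a nonempty set X whose associated metric space (X,e) is complete, let φ : [0,∞) → [0,∞) be limit normal with ψ(t) := t − φ(t) semi-coercive, and let T : X → X be (M;b;φ)-contractive, i.e., d(Tx,Ty) ≤ max{φ(M(x,y)), b(x,y)} for all x, y ∈ X. Set θ := inf{d(z,z) : z ∈ X, d(z,Tz) = d(z,z)}. If z ∈ X satisfies d(z,Tz) = d(z,z) and d(z,z) = θ, then Tz = z. -/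
open Filter Topology

noncomputable section

/-!
The distances `d (Tⁿ x) (Tⁿ⁺¹ x)` along an orbit decrease to some `r`. Where `r > 0`, right limit
normality keeps `φ` below a constant `c < r` just above `r`, so the contraction condition can only
hold through its term `b`, and the self-distances `d (Tⁿ x) (Tⁿ x)` are forced to `r` as well.
The same property opens, above each `s > r`, a gap `[s, s + κ)` containing no distance between
late orbit points; as `d (Tᵐ x) (Tⁿ x)` starts near `r` and, as `n` grows, increases by less than
`κ` at each step, it stays below `s`. So the orbit is `e`-Cauchy, and its limit is a `d`-fixed
point of self-distance `r`.

If `z` is `d`-fixed but `T z ≠ z`, already the second step of its orbit is shorter than `d z z`,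
so `r < d z z` and `z` does not minimise the self-distance among the `d`-fixed points.
-/

section MBContractive

variable {X : Type*} {d : X → X → ℝ} {φ : ℝ → ℝ} {T : X → X}

/-- `T` is `(M;b;φ)`-contractive, where `M` is `Mfun d T` and `b(x,y) = (d(x,x) + d(y,y)) / 2`. -/
def IsMBContractive (d : X → X → ℝ) (φ : ℝ → ℝ) (T : X → X) : Prop :=
  ∀ x y, d (T x) (T y) ≤ max (φ (Mfun d T x y)) ((d x x + d y y) / 2)

/-- `z` is a `d`-fixed point of `T`: its distance to `T z` is its self-distance, the least value
possible. A genuine fixed point is `d`-fixed, but not conversely. -/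
def IsDFixed (d : X → X → ℝ) (T : X → X) (z : X) : Prop :=
  d z (T z) = d z z

namespace IsPartialMetric

lemma nonneg (hd : IsPartialMetric d) (x y : X) : 0 ≤ d x y := hd.1 x y

lemma symm (hd : IsPartialMetric d) (x y : X) : d x y = d y x := hd.2.1 x y

lemma self_le_left (hd : IsPartialMetric d) (x y : X) : d x x ≤ d x y :=
  (le_max_left _ _).trans (hd.2.2.1 x y)

lemma self_le_right (hd : IsPartialMetric d) (x y : X) : d y y ≤ d x y :=
  (le_max_right _ _).trans (hd.2.2.1 x y)

lemma triangle (hd : IsPartialMetric d) (x y z : X) : d x z ≤ d x y + d y z - d y y :=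
  hd.2.2.2.1 x y z

lemma eq_of_eq_self (hd : IsPartialMetric d) {x y : X} (hx : d x y = d x x)
    (hy : d x y = d y y) : x = y :=
  hd.2.2.2.2 x y hx hy

lemma assocE_nonneg (hd : IsPartialMetric d) (x y : X) : 0 ≤ assocE d x y := by
  unfold assocE
  linarith [hd.self_le_left x y, hd.self_le_right x y]

lemma assocE_comm (hd : IsPartialMetric d) (x y : X) : assocE d x y = assocE d y x := by
  unfold assocE
  linarith [hd.symm x y]

lemma assocE_triangle (hd : IsPartialMetric d) (x y z : X) :
    assocE d x z ≤ assocE d x y + assocE d y z := by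
  unfold assocE
  linarith [hd.triangle x y z]

lemma le_add_assocE (hd : IsPartialMetric d) (x y z : X) : d x z ≤ d x y + assocE d y z := by
  unfold assocE
  linarith [hd.triangle x y z, hd.self_le_right y z]

lemma le_add_assocE_add_assocE (hd : IsPartialMetric d) (x y x' y' : X) :
    d x y ≤ d x' y' + (assocE d x x' + assocE d y y') := by
  calc d x y ≤ d x y' + assocE d y' y := hd.le_add_assocE x y' y
    _ = d y' x + assocE d y y' := by rw [hd.symm, hd.assocE_comm]
    _ ≤ d y' x' + assocE d x' x + assocE d y y' := by gcongr; exact hd.le_add_assocE y' x' x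
    _ = d x' y' + (assocE d x x' + assocE d y y') := by rw [hd.symm, hd.assocE_comm x' x]; ring

lemma abs_sub_le (hd : IsPartialMetric d) (x y x' y' : X) :
    |d x y - d x' y'| ≤ assocE d x x' + assocE d y y' := by
  rw [abs_sub_le_iff]
  constructor
  · linarith [hd.le_add_assocE_add_assocE x y x' y']
  · linarith [hd.le_add_assocE_add_assocE x' y' x y, hd.assocE_comm x x', hd.assocE_comm y y']

lemma tendsto_of_assocE {ι : Type*} {l : Filter ι} (hd : IsPartialMetric d) {u v : ι → X}
    {x y : X} (hu : Tendsto (fun i => assocE d (u i) x) l (𝓝 0))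
    (hv : Tendsto (fun i => assocE d (v i) y) l (𝓝 0)) :
    Tendsto (fun i => d (u i) (v i)) l (𝓝 (d x y)) := by
  rw [tendsto_iff_dist_tendsto_zero]
  exact squeeze_zero (fun _ => dist_nonneg) (fun i => hd.abs_sub_le (u i) (v i) x y)
    (by simpa only [add_zero] using hu.add hv)

lemma Mfun_apply_self_apply (hd : IsPartialMetric d) (T : X → X) (x : X) :
    Mfun d T x (T x) = max (d x (T x)) (d (T x) (T (T x))) := by
  have hcross : (d x (T (T x)) + d (T x) (T x)) / 2 ≤ max (d x (T x)) (d (T x) (T (T x))) := by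
    linarith [hd.triangle x (T x) (T (T x)), le_max_left (d x (T x)) (d (T x) (T (T x))),
      le_max_right (d x (T x)) (d (T x) (T (T x)))]
  rw [Mfun, max_eq_right (le_max_left _ _), max_eq_left hcross]

lemma sInf_self_le_of_isDFixed (hd : IsPartialMetric d) {w : X} (hw : IsDFixed d T w) :
    sInf {r : ℝ | ∃ z : X, d z (T z) = d z z ∧ r = d z z} ≤ d w w := by
  refine csInf_le ⟨0, ?_⟩ ⟨w, hw, rfl⟩
  rintro _ ⟨z, -, rfl⟩
  exact hd.nonneg z z

end IsPartialMetric

lemma le_Mfun (d : X → X → ℝ) (T : X → X) (x y : X) : d x y ≤ Mfun d T x y :=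
  (le_max_left _ _).trans (le_max_left _ _)

lemma IsNormal.le_self (hφ : IsNormal φ) {t : ℝ} (ht : 0 ≤ t) : φ t ≤ t := by
  rcases ht.eq_or_lt with rfl | ht
  · exact hφ.2.1.le
  · exact (hφ.2.2 t ht).le

lemma IsNormal.bddAbove_image (hφ : IsNormal φ) {A : Set ℝ} (hA : BddAbove A)
    (hA₀ : A ⊆ Set.Ici 0) : BddAbove (φ '' A) := by
  obtain ⟨C, hC⟩ := hA
  refine ⟨C, ?_⟩
  rintro _ ⟨t, ht, rfl⟩
  exact (hφ.le_self (hA₀ ht)).trans (hC ht)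

lemma IsLimitNormal.isRightLimitNormal (hφ : IsLimitNormal φ) : IsRightLimitNormal φ := by
  refine ⟨hφ.1, fun s hs => ?_⟩
  obtain ⟨_, ⟨ε, hε, rfl⟩, hlt⟩ := exists_lt_of_csInf_lt (by exact ⟨_, 1, one_pos, rfl⟩) (hφ.2 s hs)
  have hbdd : BddBelow {y : ℝ | ∃ ε : ℝ, 0 < ε ∧ y = sSup (φ '' Set.Ico s (s + ε))} := by
    refine ⟨0, ?_⟩
    rintro _ ⟨δ, -, rfl⟩
    refine Real.sSup_nonneg ?_
    rintro _ ⟨t, ht, rfl⟩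
    exact hφ.1.1 t (hs.le.trans ht.1)
  have hsub : Set.Ico s (s + ε) ⊆ Set.Ioo (s - ε) (s + ε) ∩ Set.Ici 0 :=
    fun t ht => ⟨⟨by linarith [ht.1], ht.2⟩, hs.le.trans ht.1⟩
  calc rightLimsup φ s ≤ sSup (φ '' Set.Ico s (s + ε)) := csInf_le hbdd ⟨ε, hε, rfl⟩
    _ ≤ sSup (φ '' (Set.Ioo (s - ε) (s + ε) ∩ Set.Ici 0)) :=
      csSup_le_csSup
        (hφ.1.bddAbove_image (bddAbove_Ioo.mono Set.inter_subset_left) Set.inter_subset_right)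
        ((Set.nonempty_Ico.2 (by linarith)).image φ) (Set.image_mono hsub)
    _ < s := hlt

lemma IsRightLimitNormal.exists_le_of_mem_Ico (hφ : IsRightLimitNormal φ) {s : ℝ} (hs : 0 < s) :
    ∃ c < s, ∃ ε > 0, ∀ t ∈ Set.Ico s (s + ε), φ t ≤ c := by
  obtain ⟨_, ⟨ε, hε, rfl⟩, hlt⟩ := exists_lt_of_csInf_lt (by exact ⟨_, 1, one_pos, rfl⟩) (hφ.2 s hs)
  have hbdd : BddAbove (φ '' Set.Ico s (s + ε)) :=
    hφ.1.bddAbove_image bddAbove_Ico fun t ht => hs.le.trans ht.1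
  exact ⟨_, hlt, ε, hε, fun t ht => le_csSup hbdd ⟨t, ht, rfl⟩⟩

namespace IsMBContractive

lemma step_le (hT : IsMBContractive d φ T) (hd : IsPartialMetric d) (hφ : IsNormal φ) (x : X) :
    d (T x) (T (T x)) ≤ d x (T x) := by
  by_contra! hlt
  have hcontr := hT x (T x)
  rw [hd.Mfun_apply_self_apply, max_eq_right hlt.le] at hcontr
  have hφlt := hφ.2.2 _ ((hd.nonneg x (T x)).trans_lt hlt)
  rcases le_max_iff.1 hcontr with h | h
  · exact h.not_gt hφlt
  · linarith [hd.self_le_left x (T x), hd.self_le_right x (T x)]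

lemma step_le_max (hT : IsMBContractive d φ T) (hd : IsPartialMetric d) (hφ : IsNormal φ)
    (x : X) : d (T x) (T (T x)) ≤ max (φ (d x (T x))) ((d x x + d (T x) (T x)) / 2) := by
  simpa only [hd.Mfun_apply_self_apply, max_eq_left (hT.step_le hd hφ x)] using hT x (T x)

lemma step_lt_self_of_isDFixed (hT : IsMBContractive d φ T) (hd : IsPartialMetric d)
    (hφ : IsNormal φ) {z : X} (hz : IsDFixed d T z) (hne : T z ≠ z) :
    d (T z) (T (T z)) < d z z := by
  have hself : d (T z) (T z) < d z z := by
    refine lt_of_le_of_ne (hz ▸ hd.self_le_right z (T z)) fun h => hne ?_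
    exact (hd.eq_of_eq_self hz (hz.trans h.symm)).symm
  have hφlt : φ (d z z) < d z z := hφ.2.2 _ ((hd.nonneg _ _).trans_lt hself)
  calc d (T z) (T (T z)) ≤ max (φ (d z (T z))) ((d z z + d (T z) (T z)) / 2) :=
        hT.step_le_max hd hφ z
    _ = max (φ (d z z)) ((d z z + d (T z) (T z)) / 2) := by rw [hz]
    _ < d z z := max_lt hφlt (by linarith)

lemma antitone_step (hT : IsMBContractive d φ T) (hd : IsPartialMetric d) (hφ : IsNormal φ)
    (x : X) : Antitone fun n => d (T^[n] x) (T (T^[n] x)) := by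
  refine antitone_nat_of_succ_le fun n => ?_
  simp only [Function.iterate_succ_apply']
  exact hT.step_le hd hφ _

lemma exists_tendsto_step (hT : IsMBContractive d φ T) (hd : IsPartialMetric d)
    (hφ : IsNormal φ) (x : X) :
    ∃ r, Tendsto (fun n => d (T^[n] x) (T (T^[n] x))) atTop (𝓝 r) := by
  refine ⟨_, tendsto_atTop_ciInf (hT.antitone_step hd hφ x) ⟨0, ?_⟩⟩
  rintro _ ⟨n, rfl⟩
  exact hd.nonneg _ _

section Orbit

variable {x : X} {r : ℝ}

lemma tendsto_self (hT : IsMBContractive d φ T) (hd : IsPartialMetric d)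
    (hφ : IsRightLimitNormal φ)
    (hr : Tendsto (fun n => d (T^[n] x) (T (T^[n] x))) atTop (𝓝 r)) :
    Tendsto (fun n => d (T^[n] x) (T^[n] x)) atTop (𝓝 r) := by
  have hle : ∀ n, r ≤ d (T^[n] x) (T (T^[n] x)) :=
    (hT.antitone_step hd hφ.1 x).le_of_tendsto hr
  have hlower : ∀ᶠ n in atTop, 2 * r - d (T^[n] x) (T (T^[n] x)) ≤ d (T^[n] x) (T^[n] x) := by
    rcases le_or_gt r 0 with hr₀ | hr₀
    · exact .of_forall fun n => by linarith [hle n, hd.nonneg (T^[n] x) (T^[n] x)]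
    obtain ⟨c, hc, ε, hε, hφc⟩ := hφ.exists_le_of_mem_Ico hr₀
    filter_upwards [hr.eventually_lt_const (lt_add_of_pos_right r hε)] with n hn
    have hnext : r ≤ d (T (T^[n] x)) (T (T (T^[n] x))) := by
      simpa only [Function.iterate_succ_apply'] using hle (n + 1)
    rcases le_max_iff.1 (hT.step_le_max hd hφ.1 (T^[n] x)) with h | h
    · linarith [hφc _ ⟨hle n, hn⟩]
    · linarith [hd.self_le_right (T^[n] x) (T (T^[n] x))]
  have hlim : Tendsto (fun n => 2 * r - d (T^[n] x) (T (T^[n] x))) atTop (𝓝 r) := by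
    simpa only [two_mul, add_sub_cancel_right] using hr.const_sub (2 * r)
  exact tendsto_of_tendsto_of_tendsto_of_le_of_le' hlim hr hlower
    (.of_forall fun n => hd.self_le_left _ _)

lemma tendsto_assocE_step (hT : IsMBContractive d φ T) (hd : IsPartialMetric d)
    (hφ : IsRightLimitNormal φ)
    (hr : Tendsto (fun n => d (T^[n] x) (T (T^[n] x))) atTop (𝓝 r)) :
    Tendsto (fun n => assocE d (T^[n] x) (T (T^[n] x))) atTop (𝓝 0) := by
  have hself := hT.tendsto_self hd hφ hr
  have hself_succ : Tendsto (fun n => d (T (T^[n] x)) (T (T^[n] x))) atTop (𝓝 r) := by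
    simpa only [Function.comp_def, Function.iterate_succ_apply'] using
      hself.comp (tendsto_add_atTop_nat 1)
  have hlim := ((hr.const_mul 2).sub hself).sub hself_succ
  rwa [show 2 * r - r - r = 0 by ring] at hlim

lemma exists_gap (hT : IsMBContractive d φ T) (hd : IsPartialMetric d)
    (hφ : IsRightLimitNormal φ) {s : ℝ} (hs : 0 < s) (hrs : r < s) :
    ∃ κ > 0, ∀ a b, assocE d a (T a) < κ → d a (T a) < r + κ →
      assocE d b (T b) < κ → d b (T b) < r + κ → d a b < s + κ → d a b < s := by
  obtain ⟨c, hc, ε, hε, hφc⟩ := hφ.exists_le_of_mem_Ico hs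
  obtain ⟨κ, hκ, hκlt⟩ : ∃ κ > 0, κ < min (ε / 2) (min ((s - c) / 2) ((s - r) / 3)) :=
    exists_between (by simp only [lt_min_iff]; refine ⟨?_, ?_, ?_⟩ <;> linarith)
  obtain ⟨hκε, hκc, hκr⟩ : κ < ε / 2 ∧ κ < (s - c) / 2 ∧ κ < (s - r) / 3 := by
    simpa only [lt_min_iff] using hκlt
  refine ⟨κ, hκ, fun a b hea ha heb hb hab => ?_⟩
  by_contra! hsab
  have hM : Mfun d T a b < s + ε := by
    have haTb := hd.le_add_assocE a b (T b)
    have hTab := hd.le_add_assocE b a (T a)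
    rw [hd.symm b, hd.symm b] at hTab
    unfold Mfun
    refine max_lt (max_lt ?_ (max_lt ?_ ?_)) ?_ <;> linarith
  have hφM : φ (Mfun d T a b) ≤ c := hφc _ ⟨hsab.trans (le_Mfun d T a b), hM⟩
  have hclose := hd.le_add_assocE_add_assocE a b (T a) (T b)
  rcases le_max_iff.1 (hT a b) with h | h
  · linarith
  · linarith [hd.self_le_left a (T a), hd.self_le_left b (T b)]

lemma exists_forall_iterate_add_lt (hT : IsMBContractive d φ T) (hd : IsPartialMetric d)
    (hφ : IsRightLimitNormal φ)
    (hr : Tendsto (fun n => d (T^[n] x) (T (T^[n] x))) atTop (𝓝 r)) {s : ℝ} (hrs : r < s) :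
    ∃ p, ∀ m ≥ p, ∀ k, d (T^[m] x) (T^[m + k] x) < s := by
  have hs : 0 < s := (ge_of_tendsto' hr fun _ => hd.nonneg _ _).trans_lt hrs
  obtain ⟨κ, hκ, hgap⟩ := hT.exists_gap hd hφ hs hrs
  obtain ⟨p, hp⟩ := eventually_atTop.1 <|
    ((hT.tendsto_assocE_step hd hφ hr).eventually_lt_const hκ).and
      (hr.eventually_lt_const (lt_add_of_pos_right r hκ))
  refine ⟨p, fun m hm k => ?_⟩
  have hbelow (j : ℕ) (h : d (T^[m] x) (T^[m + j] x) < s + κ) :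
      d (T^[m] x) (T^[m + j] x) < s :=
    hgap _ _ (hp m hm).1 (hp m hm).2 (hp _ (by omega)).1 (hp _ (by omega)).2 h
  induction k with
  | zero =>
    refine hbelow 0 ?_
    rw [add_zero]
    linarith [(hp m hm).2, hd.self_le_left (T^[m] x) (T (T^[m] x))]
  | succ k ih =>
    refine hbelow (k + 1) ?_
    rw [← add_assoc, Function.iterate_succ_apply']
    linarith [hd.le_add_assocE (T^[m] x) (T^[m + k] x) (T (T^[m + k] x)),
      (hp (m + k) (by omega)).1]

lemma assocE_cauchy_iterate (hT : IsMBContractive d φ T) (hd : IsPartialMetric d)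
    (hφ : IsRightLimitNormal φ)
    (hr : Tendsto (fun n => d (T^[n] x) (T (T^[n] x))) atTop (𝓝 r)) {α : ℝ} (hα : 0 < α) :
    ∃ p, ∀ m n, p ≤ m → p ≤ n → assocE d (T^[m] x) (T^[n] x) < α := by
  obtain ⟨p, hp⟩ :=
    hT.exists_forall_iterate_add_lt hd hφ hr (lt_add_of_pos_right r (half_pos (half_pos hα)))
  obtain ⟨q, hq⟩ := eventually_atTop.1 <|
    (hT.tendsto_self hd hφ hr).eventually_const_lt (sub_lt_self r (half_pos (half_pos hα)))
  refine ⟨max p q, fun m n hm hn => ?_⟩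
  wlog hmn : m ≤ n generalizing m n
  · rw [hd.assocE_comm]
    exact this n m hn hm (le_of_not_ge hmn)
  obtain ⟨k, rfl⟩ := Nat.exists_eq_add_of_le hmn
  unfold assocE
  linarith [hp m (le_of_max_le_left hm) k, hq m (le_of_max_le_right hm),
    hq (m + k) (le_of_max_le_right hn)]

end Orbit

lemma isDFixed_of_tendsto {ι : Type*} {l : Filter ι} [l.NeBot] (hT : IsMBContractive d φ T)
    (hd : IsPartialMetric d) (hφ : IsNormal φ) {u : ι → X} {w : X}
    (hu : Tendsto (fun i => assocE d (u i) w) l (𝓝 0))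
    (huT : Tendsto (fun i => assocE d (u i) (T (u i))) l (𝓝 0)) : IsDFixed d T w := by
  by_contra hne
  have hlt : d w w < d w (T w) := lt_of_le_of_ne (hd.self_le_left w (T w)) (Ne.symm hne)
  have hTu : Tendsto (fun i => assocE d (T (u i)) w) l (𝓝 0) := by
    refine squeeze_zero (fun i => hd.assocE_nonneg _ _)
      (fun i => hd.assocE_triangle (T (u i)) (u i) w) ?_
    simpa only [hd.assocE_comm, add_zero] using huT.add hu
  have hconst (y : X) : Tendsto (fun _ : ι => assocE d y y) l (𝓝 0) := by
    simpa only [assocE, two_mul, add_sub_cancel_right, sub_self] using tendsto_const_nhds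
  have hcross : Tendsto (fun i => (d (u i) (T w) + d (T (u i)) w) / 2) l
      (𝓝 ((d w (T w) + d w w) / 2)) :=
    ((hd.tendsto_of_assocE hu (hconst _)).add (hd.tendsto_of_assocE hTu (hconst w))).div_const 2
  have hmid : (d w (T w) + d w w) / 2 < d w (T w) := by linarith
  have hM : ∀ᶠ i in l, Mfun d T (u i) w = d w (T w) := by
    filter_upwards [(hd.tendsto_of_assocE hu (hconst w)).eventually_lt_const hlt,
      (hd.tendsto_of_assocE hu hTu).eventually_lt_const hlt,
      hcross.eventually_lt_const hmid] with i h₁ h₂ h₃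
    rw [Mfun, max_eq_right h₂.le, max_eq_right h₁.le, max_eq_left h₃.le]
  have hbound : ∀ᶠ i in l,
      d (T (u i)) (T w) ≤ max (φ (d w (T w))) ((d (u i) (u i) + d w w) / 2) := by
    filter_upwards [hM] with i hi
    exact hi ▸ hT (u i) w
  have hself : Tendsto (fun i => (d (u i) (u i) + d w w) / 2) l (𝓝 (d w w)) := by
    simpa only [add_self_div_two] using
      ((hd.tendsto_of_assocE hu hu).add_const (d w w)).div_const 2
  have hle : d w (T w) ≤ max (φ (d w (T w))) (d w w) :=
    le_of_tendsto_of_tendsto (hd.tendsto_of_assocE hTu (hconst _))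
      (tendsto_const_nhds.max hself) hbound
  exact hle.not_gt (max_lt (hφ.2.2 _ ((hd.nonneg w w).trans_lt hlt)) hlt)

theorem exists_isDFixed_forall_self_le_step (hT : IsMBContractive d φ T)
    (hd : IsPartialMetric d) (hcomp : eComplete d) (hφ : IsRightLimitNormal φ) (x : X) :
    ∃ w, IsDFixed d T w ∧ ∀ n, d w w ≤ d (T^[n] x) (T (T^[n] x)) := by
  obtain ⟨r, hr⟩ := hT.exists_tendsto_step hd hφ.1 x
  obtain ⟨w, hw⟩ := hcomp (fun n => T^[n] x) fun _ hα => hT.assocE_cauchy_iterate hd hφ hr hα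
  have hwr : d w w = r :=
    tendsto_nhds_unique (hd.tendsto_of_assocE hw hw) (hT.tendsto_self hd hφ hr)
  exact ⟨w, hT.isDFixed_of_tendsto hd hφ.1 hw (hT.tendsto_assocE_step hd hφ hr),
    hwr ▸ (hT.antitone_step hd hφ.1 x).le_of_tendsto hr⟩

end IsMBContractive

theorem fixed_of_dFixed_min_general (hd : IsPartialMetric d) (hcomp : eComplete d)
    (hφ : IsRightLimitNormal φ) (hT : IsMBContractive d φ T) {z : X} (hz : IsDFixed d T z)
    (hmin : ∀ w, IsDFixed d T w → d z z ≤ d w w) : T z = z := by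
  by_contra hne
  obtain ⟨w, hw, hwle⟩ := hT.exists_isDFixed_forall_self_le_step hd hcomp hφ z
  have hstep : d (T z) (T (T z)) < d z z := hT.step_lt_self_of_isDFixed hd hφ.1 hz hne
  exact ((hmin w hw).trans (hwle 1)).not_gt hstep

end MBContractive

/-- a `d`-fixed point realizing `θ = inf {d(z,z) : z d-fixed}` is a
genuine fixed point. -/
theorem fixed_of_dFixed_min {X : Type*} [Nonempty X] (d : X → X → ℝ)
    (hd : IsPartialMetric d) (hcomp : eComplete d)
    (φ : ℝ → ℝ) (hφ : IsLimitNormal φ) (hψ : SemiCoercive (fun t => t - φ t))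
    (T : X → X)
    (hT : ∀ x y : X, d (T x) (T y) ≤
      max (φ (Mfun d T x y)) ((d x x + d y y) / 2))
    (θ : ℝ) (hθ : θ = sInf {r : ℝ | ∃ z : X, d z (T z) = d z z ∧ r = d z z})
    (z : X) (hz : d z (T z) = d z z) (hzθ : d z z = θ) :
    T z = z :=
  fixed_of_dFixed_min_general hd hcomp hφ.isRightLimitNormal hT hz fun _ hw =>
    (hzθ.trans hθ).trans_le (hd.sInf_self_le_of_isDFixed hw)
end
end

section
/- Let d be a partial metric on a nonempty set X, let φ : [0,∞) → [0,∞) be normal, and let T : X → X be (M;b;φ)-contractive, i.e., d(Tx,Ty) ≤ max{φ(M(x,y)), b(x,y)} for all x, y ∈ X. Then T has at most one fixed point: if Tu = u and Tv = v, then u = v. -/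
open Filter Topology

noncomputable section

/-!
At a pair of fixed points `u`, `v` the four terms of `M(u,v)` collapse to `d(u,v)`, since
self-distances are at most `d(u,v)`. The contraction thus reads `d(u,v) ≤ max{φ(d(u,v)), b(u,v)}`,
and `φ(t) < t` rules out the first alternative for `d(u,v) > b(u,v) ≥ 0`. So `d(u,v)` is at most the
mean of `d(u,u)` and `d(v,v)` while dominating both; all three agree, and separation
(the last property of a partial metric) gives `u = v`.
-/

theorem le_of_le_max_apply {α : Type*} [LinearOrder α] [Zero α] {φ : α → α}
    (hφ : ∀ t, 0 < t → φ t < t) {b t : α} (hb : 0 ≤ b) (ht : t ≤ max (φ t) b) : t ≤ b := by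
  by_contra! hbt
  exact ht.not_gt (max_lt (hφ t (hb.trans_lt hbt)) hbt)

theorem eq_and_eq_of_max_le_of_le_half_add {𝕜 : Type*} [Field 𝕜] [LinearOrder 𝕜]
    [IsStrictOrderedRing 𝕜] {a b t : 𝕜} (hmax : max a b ≤ t) (hmean : t ≤ (a + b) / 2) :
    t = a ∧ t = b := by
  obtain ⟨ha, hb⟩ := max_le_iff.mp hmax
  constructor <;> linarith

section FixedPoints

variable {X : Type*} {d : X → X → ℝ} {T : X → X} {u v : X}

theorem Mfun_eq_of_isFixedPt (hu : Function.IsFixedPt T u) (hv : Function.IsFixedPt T v)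
    (hself : max (d u u) (d v v) ≤ d u v) : Mfun d T u v = d u v := by
  rw [Mfun, hu.eq, hv.eq, max_eq_left hself, add_self_div_two, max_self]

theorem fixedPoint_unique_general {φ : ℝ → ℝ} (hnonneg : ∀ x, 0 ≤ d x x)
    (hself : ∀ x y, max (d x x) (d y y) ≤ d x y)
    (hsep : ∀ x y, d x y = d x x → d x y = d y y → x = y)
    (hφ : ∀ t, 0 < t → φ t < t)
    (hT : ∀ x y, d (T x) (T y) ≤ max (φ (Mfun d T x y)) ((d x x + d y y) / 2))
    (hu : Function.IsFixedPt T u) (hv : Function.IsFixedPt T v) : u = v := by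
  have hcontr : d u v ≤ max (φ (d u v)) ((d u u + d v v) / 2) := by
    simpa only [hu.eq, hv.eq, Mfun_eq_of_isFixedPt hu hv (hself u v)] using hT u v
  have hmean : d u v ≤ (d u u + d v v) / 2 :=
    le_of_le_max_apply hφ (by linarith [hnonneg u, hnonneg v]) hcontr
  obtain ⟨huv_u, huv_v⟩ := eq_and_eq_of_max_le_of_le_half_add (hself u v) hmean
  exact hsep u v huv_u huv_v

end FixedPoints

/-- an `(M;b;φ)`-contractive map has at most one fixed point. -/
theorem fixedPoint_unique {X : Type*} [Nonempty X] (d : X → X → ℝ)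
    (hd : IsPartialMetric d) (φ : ℝ → ℝ) (hφ : IsNormal φ)
    (T : X → X)
    (hT : ∀ x y : X, d (T x) (T y) ≤
      max (φ (Mfun d T x y)) ((d x x + d y y) / 2))
    (u v : X) (hu : T u = u) (hv : T v = v) :
    u = v := by
  obtain ⟨hnonneg, -, hself, -, hsep⟩ := hd
  exact fixedPoint_unique_general (fun x => hnonneg x x) hself hsep hφ.2.2 hT hu hv
end
end
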